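/- Let 0 < α < 2 and define F : ℝ² → ℝ by F(x,y) = w_α(π/2 + (x−y)/√2, π/2 + (x+y)/√2), i.e. the symbol w_α expressed in the rotated coordinates diagonalizing its Hessian at the cusp point (π/2, π/2). Then: (i) F(0,y) = 1 for all y ∈ ℝ (so every pure y-derivative of F of order ≥ 1 vanishes at the origin); (ii) ∂²_x F(0,0) = −α(2−α)/8 and ∂_x∂_y F(0,0) = 0; (iii) ∂³_x F(0,0) = α(α² − 6α + 4)/(16√2), ∂²_x∂_y F(0,0) = 0, and ∂_x∂²_y F(0,0) = −α/(4√2). -/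

import Mathlib

open Real

lemma aux_pow (c k p x : ℝ) (h : 0 < 1 + sin (c * x) * k) :
    HasDerivAt (fun x => (1 + sin (c * x) * k) ^ p)
      (p * (1 + sin (c * x) * k) ^ (p - 1) * (c * cos (c * x) * k)) x := by
  have h1 : HasDerivAt (fun x : ℝ => c * x) c x := by
    simpa using (hasDerivAt_id x).const_mul c
  have h2 := ((h1.sin.mul_const k).const_add 1).rpow_const (p := p) (Or.inl h.ne')
  convert h2 using 1
  ring

lemma aux_powy (c s p y : ℝ) (h : 0 < 1 + s * cos (c * y)) :
    HasDerivAt (fun y => (1 + s * cos (c * y)) ^ p)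
      (p * (1 + s * cos (c * y)) ^ (p - 1) * (-(c * sin (c * y) * s))) y := by
  have h1 : HasDerivAt (fun x : ℝ => c * x) c y := by
    simpa using (hasDerivAt_id y).const_mul c
  have h2 := ((h1.cos.const_mul s).const_add 1).rpow_const (p := p) (Or.inl h.ne')
  convert h2 using 1
  ring

lemma aux_sin (c x : ℝ) : HasDerivAt (fun x => sin (c * x)) (c * cos (c * x)) x := by
  have h1 : HasDerivAt (fun x : ℝ => c * x) c x := by
    simpa using (hasDerivAt_id x).const_mul c
  convert h1.sin using 1
  ring

lemma aux_cos (c x : ℝ) : HasDerivAt (fun x => cos (c * x)) (-(c * sin (c * x))) x := by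
  have h1 : HasDerivAt (fun x : ℝ => c * x) c x := by
    simpa using (hasDerivAt_id x).const_mul c
  convert h1.cos using 1
  ring

lemma aux_ev (c : ℝ) : ∀ᶠ x in nhds (0 : ℝ), 0 < 1 + sin (c * x) * 1 ∧ 0 < 1 - sin (c * x) := by
  have h1 : ContinuousAt (fun x : ℝ => 1 + sin (c * x) * 1) 0 := by fun_prop
  have h2 : ContinuousAt (fun x : ℝ => 1 - sin (c * x)) 0 := by fun_prop
  exact (h1.eventually_const_lt (by simp)).and (h2.eventually_const_lt (by simp))

theorem stmt8 (α : ℝ) (hα1 : 0 < α) (hα2 : α < 2)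
    (w : ℝ → ℝ → ℝ)
    (hw : ∀ x y, w x y = (Real.sin (x / 2) ^ 2 + Real.sin (y / 2) ^ 2) ^ (α / 2))
    (F : ℝ → ℝ → ℝ)
    (hF : ∀ x y, F x y = w (π / 2 + (x - y) / Real.sqrt 2) (π / 2 + (x + y) / Real.sqrt 2)) :
    (∀ y, F 0 y = 1) ∧
    (∀ n : ℕ, 1 ≤ n → iteratedDeriv n (fun y => F 0 y) 0 = 0) ∧
    deriv (deriv (fun x => F x 0)) 0 = -(α * (2 - α) / 8) ∧
    deriv (fun x => deriv (fun y => F x y) 0) 0 = 0 ∧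
    deriv (deriv (deriv (fun x => F x 0))) 0 = α * (α ^ 2 - 6 * α + 4) / (16 * Real.sqrt 2) ∧
    deriv (deriv (fun x => deriv (fun y => F x y) 0)) 0 = 0 ∧
    deriv (fun x => deriv (deriv (fun y => F x y)) 0) 0 = -(α / (4 * Real.sqrt 2)) := by
  obtain ⟨c, hc⟩ : ∃ c : ℝ, c = 1 / √2 := ⟨_, rfl⟩
  have hs : √2 ≠ 0 := by positivity
  have hs2 : √2 ^ 2 = 2 := Real.sq_sqrt (by norm_num)
  have hc2 : c ^ 2 = 1 / 2 := by rw [hc, div_pow, hs2]; norm_num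
  have hG : ∀ x y, F x y = (1 + sin (c * x) * cos (c * y)) ^ (α / 2) := by
    intro x y
    rw [hF, hw]
    congr 1
    have e1 : (π / 2 + (x - y) / √2) = c * x - c * y + π / 2 := by rw [hc]; ring
    have e2 : (π / 2 + (x + y) / √2) = c * x + c * y + π / 2 := by rw [hc]; ring
    rw [e1, e2, Real.sin_sq_eq_half_sub, Real.sin_sq_eq_half_sub, mul_div_cancel₀ _ two_ne_zero,
      mul_div_cancel₀ _ two_ne_zero, cos_add_pi_div_two, cos_add_pi_div_two, sin_sub, sin_add]
    ring
  have h0 : ∀ y, F 0 y = 1 := by intro y; simp [hG]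
  have hy : ∀ x, deriv (fun y => F x y) 0 = 0 := by
    intro x
    have h1 := deriv_comp_neg (fun y => F x y) 0
    have h2 : (fun y => F x (-y)) = fun y => F x y := by
      funext y; simp [hG]
    rw [h2] at h1
    simp only [neg_zero] at h1
    linarith
  have hev := aux_ev c
  set β := α / 2 with hβ
  have hx0 : (fun x => F x 0) = fun x => (1 + sin (c * x) * 1) ^ β := by
    funext x; simp [hG]
  have hd1 : deriv (fun x => F x 0) =ᶠ[nhds 0]
      fun x => β * (1 + sin (c * x) * 1) ^ (β - 1) * (c * cos (c * x) * 1) := by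
    rw [hx0]
    filter_upwards [hev] with x hx
    exact (aux_pow c 1 β x hx.1).deriv
  have hd2 : deriv (deriv (fun x => F x 0)) =ᶠ[nhds 0]
      fun x => β * ((β - 1) * (1 + sin (c * x) * 1) ^ (β - 1 - 1) * (c * cos (c * x) * 1))
          * (c * cos (c * x) * 1)
        + β * (1 + sin (c * x) * 1) ^ (β - 1) * (c * -(c * sin (c * x)) * 1) := by
    refine hd1.deriv.trans ?_
    filter_upwards [hev] with x hx
    exact (((aux_pow c 1 (β - 1) x hx.1).const_mul β).mul
      (((aux_cos c x).const_mul c).mul_const 1)).deriv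
  have hd3 : deriv (deriv (deriv (fun x => F x 0))) 0 = c ^ 3 * (β * (β - 1) * (β - 2) - β) := by
    rw [hd2.deriv_eq]
    have hp := hev.self_of_nhds.1
    have hC := ((aux_cos c 0).const_mul c).mul_const 1
    have hS := (((aux_sin c 0).const_mul c).neg).const_mul c
    have h := (((((aux_pow c 1 (β - 1 - 1) 0 hp).const_mul (β - 1)).mul hC).const_mul β).mul hC).add
      (((aux_pow c 1 (β - 1) 0 hp).const_mul β).mul
        ((((aux_sin c 0).const_mul c).neg.const_mul c).mul_const 1))
    exact h.deriv.trans (by simp; ring)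
  have hyy : (fun x => deriv (deriv (fun y => F x y)) 0) =ᶠ[nhds 0]
      fun x => (-(c ^ 2 * β)) * ((1 + sin (c * x) * 1) ^ (β - 1) * sin (c * x)) := by
    filter_upwards [hev] with x hx
    have hpos : ∀ y, 0 < 1 + sin (c * x) * cos (c * y) := by
      intro y
      have := hx.1
      have := hx.2
      have := neg_one_le_cos (c * y)
      have := cos_le_one (c * y)
      by_cases hsn : 0 ≤ sin (c * x) <;> nlinarith
    have e1 : deriv (fun y => F x y) = fun y => β * (1 + sin (c * x) * cos (c * y)) ^ (β - 1)
        * (-(c * sin (c * y) * sin (c * x))) := by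
      have : (fun y => F x y) = fun y => (1 + sin (c * x) * cos (c * y)) ^ β := by
        funext y; exact hG x y
      rw [this]
      funext y
      exact (aux_powy c _ β y (hpos y)).deriv
    rw [e1]
    have h := ((aux_powy c _ (β - 1) 0 (hpos 0)).const_mul β).mul
      (((aux_sin c 0).const_mul c).mul_const (sin (c * x))).neg
    exact h.deriv.trans (by simp; ring)
  refine ⟨h0, ?_, ?_, ?_, ?_, ?_, ?_⟩
  · intro n hn
    have : (fun y => F 0 y) = fun _ => (1 : ℝ) := funext h0
    rw [this, iteratedDeriv_const]
    simp; omega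
  · rw [hd2.self_of_nhds]
    simp
    rw [hβ]
    linear_combination (α / 2 * (α / 2 - 1)) * hc2
  · simp [hy]
  · rw [hd3, pow_succ, hc2, hc, hβ]
    field_simp
    ring
  · simp [hy]
  · rw [hyy.deriv_eq]
    have h := ((aux_pow c 1 (β - 1) 0 hev.self_of_nhds.1).mul (aux_sin c 0)).const_mul (-(c ^ 2 * β))
    refine h.deriv.trans ?_
    simp
    rw [hc2, hc, hβ]
    field_simp
    ring
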